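/- Let E₀, E₁ : S¹ → ℝ² be continuous rotating vector fields, i.e., ⟨JE_i(x), x⟩ ≠ 0 for all x ∈ S¹, i = 0, 1. Then there exists a continuous homotopy H : [0,1] × S¹ → ℝ² with H(0,·) = E₀, H(1,·) = E₁ and ⟨J H(t,x), x⟩ ≠ 0 for all (t,x) if and only if sign⟨J E₀(x), x⟩ = sign⟨J E₁(y), y⟩ for all x, y ∈ S¹, i.e., if and only if rind(E₀) = rind(E₁). Thus the ring index classifies rotating fields up to admissible homotopy. -/

import Mathlib

/-!
Along an admissible homotopy the pairing `⟨J H(t,x), x⟩` is a continuous nowhere vanishing function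
on the connected set `[0,1] × S¹`, so its sign is constant. Conversely, `v ↦ ⟨J v, x⟩` is linear, so
the vectors on which it has a prescribed sign form a convex set, and fields with the same ring index
are joined by the straight-line homotopy.
-/

open Set

/-- Counterclockwise rotation of the plane by `π/2`: `J(a,b) = (-b,a)`. -/
def J (p : ℝ × ℝ) : ℝ × ℝ := (-p.2, p.1)

/-- Euclidean inner product on `ℝ²`. -/
def dot (p q : ℝ × ℝ) : ℝ := p.1 * q.1 + p.2 * q.2

/-- The unit circle `S¹ ⊆ ℝ²`. -/
def unitCircle : Set (ℝ × ℝ) := {p | p.1 ^ 2 + p.2 ^ 2 = 1}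

section Sign

theorem real_sign_eq_coe_sign (r : ℝ) : Real.sign r = SignType.sign r := by
  rcases lt_trichotomy r 0 with hr | rfl | hr <;> simp [*, Real.sign_of_neg, Real.sign_of_pos]

theorem signType_coe_injective {R : Type*} [Ring R] [CharZero R] :
    Function.Injective ((↑) : SignType → R) := by
  rintro (_ | _ | _) (_ | _ | _) <;>
    simp [eq_neg_iff_add_eq_zero, neg_eq_iff_add_eq_zero, one_add_one_eq_two]

theorem real_sign_eq_real_sign_iff {a b : ℝ} :
    Real.sign a = Real.sign b ↔ SignType.sign a = SignType.sign b := by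
  rw [real_sign_eq_coe_sign, real_sign_eq_coe_sign, signType_coe_injective.eq_iff]

theorem convex_preimage_sign {𝕜 M : Type*} [Semiring 𝕜] [PartialOrder 𝕜] [AddCommMonoid M]
    [LinearOrder M] [IsOrderedAddMonoid M] [Module 𝕜 M] [PosSMulMono 𝕜 M] (c : SignType) :
    Convex 𝕜 ((SignType.sign : M → SignType) ⁻¹' {c}) :=
  (ordConnected_singleton.preimage_mono SignType.sign.monotone).convex

theorem sign_eq_of_isPreconnected {X M : Type*} [TopologicalSpace X] [Zero M] [LinearOrder M]
    [TopologicalSpace M] [OrderTopology M] {s : Set X} (hs : IsPreconnected s) {g : X → M}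
    (hg : ContinuousOn g s) (hg₀ : ∀ x ∈ s, g x ≠ 0) {x y : X} (hx : x ∈ s) (hy : y ∈ s) :
    SignType.sign (g x) = SignType.sign (g y) :=
  hs.constant (f := fun z => SignType.sign (g z))
    (fun z hz => (continuousAt_sign_of_ne_zero (hg₀ z hz)).comp_continuousWithinAt (hg z hz)) hx hy

end Sign

section AdmissibleHomotopy

variable {X V : Type*} [AddCommGroup V] [Module ℝ V] {ω : X → V →ₗ[ℝ] ℝ} {s : Set X}
  {E₀ E₁ : X → V}

/-- Rotating vector fields with respect to a field `ω` of linear functionals. Rotating fields along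
a degeneracy ring `f⁻¹(0)` are the case `ω x v = ⟨J v, ∇f(x)⟩`. -/
def IsRotatingOn (ω : X → V →ₗ[ℝ] ℝ) (s : Set X) (E : X → V) : Prop :=
  ∀ x ∈ s, ω x (E x) ≠ 0

variable [TopologicalSpace X] [TopologicalSpace V]

/-- Homotopy over `s` through rotating fields. As in `ContinuousOn`, homotopies are total functions
of which only the restriction to `[0, 1] × s` matters. -/
def AdmissiblyHomotopicOn (ω : X → V →ₗ[ℝ] ℝ) (s : Set X) (E₀ E₁ : X → V) : Prop :=
  ∃ H : ℝ × X → V,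
    ContinuousOn H (Icc (0 : ℝ) 1 ×ˢ s) ∧
    (∀ x ∈ s, H (0, x) = E₀ x) ∧
    (∀ x ∈ s, H (1, x) = E₁ x) ∧
    ∀ t ∈ Icc (0 : ℝ) 1, IsRotatingOn ω s fun x => H (t, x)

theorem AdmissiblyHomotopicOn.sign_eq (h : AdmissiblyHomotopicOn ω s E₀ E₁)
    (hs : IsPreconnected s) (hω : ContinuousOn (fun p : X × V => ω p.1 p.2) (s ×ˢ univ))
    {x y : X} (hx : x ∈ s) (hy : y ∈ s) :
    SignType.sign (ω x (E₀ x)) = SignType.sign (ω y (E₁ y)) := by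
  obtain ⟨H, hH, hH₀, hH₁, hrot⟩ := h
  have hpairing : ContinuousOn (fun p : ℝ × X => ω p.2 (H p)) (Icc (0 : ℝ) 1 ×ˢ s) :=
    hω.comp (continuousOn_snd.prodMk hH) fun p hp => ⟨hp.2, mem_univ _⟩
  have hsign : SignType.sign (ω x (H (0, x))) = SignType.sign (ω y (H (1, y))) :=
    sign_eq_of_isPreconnected (isPreconnected_Icc.prod hs) hpairing
      (fun p hp => hrot p.1 hp.1 p.2 hp.2) (mk_mem_prod (left_mem_Icc.2 zero_le_one) hx)
      (mk_mem_prod (right_mem_Icc.2 zero_le_one) hy)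
  rwa [hH₀ x hx, hH₁ y hy] at hsign

variable [IsTopologicalAddGroup V] [ContinuousSMul ℝ V]

theorem admissiblyHomotopicOn_of_sign_eq (hE₀ : ContinuousOn E₀ s) (hE₁ : ContinuousOn E₁ s)
    (hrot : IsRotatingOn ω s E₀)
    (hsign : ∀ x ∈ s, SignType.sign (ω x (E₀ x)) = SignType.sign (ω x (E₁ x))) :
    AdmissiblyHomotopicOn ω s E₀ E₁ := by
  refine ⟨fun p => AffineMap.lineMap (E₀ p.2) (E₁ p.2) p.1, ?_, by simp, by simp, ?_⟩
  · exact (hE₀.comp continuousOn_snd fun p hp => hp.2).lineMap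
      (hE₁.comp continuousOn_snd fun p hp => hp.2) continuousOn_fst
  · intro t ht x hx
    have hconvex : Convex ℝ {v | SignType.sign (ω x v) = SignType.sign (ω x (E₀ x))} :=
      (convex_preimage_sign _).linear_preimage (ω x)
    have hsegment : SignType.sign (ω x (AffineMap.lineMap (E₀ x) (E₁ x) t)) =
        SignType.sign (ω x (E₀ x)) :=
      hconvex.lineMap_mem rfl (hsign x hx).symm ht
    rw [← sign_ne_zero, hsegment, sign_ne_zero]
    exact hrot x hx

theorem admissibly_homotopic_iff_same_ring_index_general (hs : IsPreconnected s)
    (hω : ContinuousOn (fun p : X × V => ω p.1 p.2) (s ×ˢ univ))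
    (hE₀ : ContinuousOn E₀ s) (hE₁ : ContinuousOn E₁ s) (hrot : IsRotatingOn ω s E₀) :
    AdmissiblyHomotopicOn ω s E₀ E₁ ↔
      ∀ x ∈ s, ∀ y ∈ s, SignType.sign (ω x (E₀ x)) = SignType.sign (ω y (E₁ y)) :=
  ⟨fun h _ hx _ hy => h.sign_eq hs hω hx hy,
    fun h => admissiblyHomotopicOn_of_sign_eq hE₀ hE₁ hrot fun x hx => h x hx x hx⟩

end AdmissibleHomotopy

section UnitCircle

theorem isPreconnected_unitCircle : IsPreconnected unitCircle := by
  have himage : Complex.equivRealProdCLM '' Metric.sphere 0 1 = unitCircle := by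
    rw [ContinuousLinearEquiv.image_eq_preimage_symm]
    ext p
    simp [unitCircle, Complex.norm_def, Complex.normSq_apply, ← sq]
  rw [← himage]
  have hsphere : IsPreconnected (Metric.sphere (0 : ℂ) 1) :=
    isPreconnected_sphere (by simp [Complex.rank_real_complex]) 0 1
  exact hsphere.image _ Complex.equivRealProdCLM.continuous.continuousOn

/-- The field of functionals `v ↦ ⟨J v, x⟩` with respect to which fields on the circle rotate. -/
def circlePairing (x : ℝ × ℝ) : ℝ × ℝ →ₗ[ℝ] ℝ where
  toFun v := dot (J v) x
  map_add' v w := by simp only [dot, J, Prod.fst_add, Prod.snd_add]; ring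
  map_smul' c v := by
    simp only [dot, J, Prod.smul_fst, Prod.smul_snd, smul_eq_mul, RingHom.id_apply]; ring

theorem continuous_circlePairing :
    Continuous fun p : (ℝ × ℝ) × (ℝ × ℝ) => circlePairing p.1 p.2 := by
  change Continuous fun p : (ℝ × ℝ) × (ℝ × ℝ) => -p.2.2 * p.1.1 + p.2.1 * p.1.2
  fun_prop

end UnitCircle

/-- Propositions 2.9 and 2.10 combined: two continuous rotating fields on `S¹` are
admissibly homotopic if and only if they have the same ring index, i.e. the same constant
sign of `⟨JE(x), x⟩`.  The ring index thus classifies rotating fields up to admissible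
homotopy. -/
theorem admissibly_homotopic_iff_same_ring_index
    (E₀ E₁ : ℝ × ℝ → ℝ × ℝ)
    (hE₀ : ContinuousOn E₀ unitCircle) (hE₁ : ContinuousOn E₁ unitCircle)
    (hrot₀ : ∀ x ∈ unitCircle, dot (J (E₀ x)) x ≠ 0)
    (hrot₁ : ∀ x ∈ unitCircle, dot (J (E₁ x)) x ≠ 0) :
    (∃ H : ℝ × (ℝ × ℝ) → ℝ × ℝ,
        ContinuousOn H (Icc (0 : ℝ) 1 ×ˢ unitCircle) ∧
        (∀ x ∈ unitCircle, H (0, x) = E₀ x) ∧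
        (∀ x ∈ unitCircle, H (1, x) = E₁ x) ∧
        ∀ t ∈ Icc (0 : ℝ) 1, ∀ x ∈ unitCircle, dot (J (H (t, x))) x ≠ 0) ↔
      ∀ x ∈ unitCircle, ∀ y ∈ unitCircle,
        Real.sign (dot (J (E₀ x)) x) = Real.sign (dot (J (E₁ y)) y) := by
  simp only [real_sign_eq_real_sign_iff]
  exact admissibly_homotopic_iff_same_ring_index_general (ω := circlePairing)
    isPreconnected_unitCircle continuous_circlePairing.continuousOn hE₀ hE₁ hrot₀
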